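/- arXiv:2203.09851 — 2 statements merged into one kernel-verified Lean document; each statement's English description precedes it below -/
import Mathlib

section
/- For every Δt > 0 and every datum f : V → ℝ there exists a unique u : V → ℝ such that for all K ∈ V: (m K/Δt)·(u K − f K) + Σ_{L∈V} τ K L·(u K − u L) = 0. (This is the deterministic existence-and-uniqueness core of Proposition 2.1 for one time step of the semi-implicit finite-volume scheme.) -/
/-!
A step amounts to a linear system `A u = c f`, where `A` is a graph Laplacian plus a positive
diagonal. At a minimum point of `u` the Laplacian term is nonpositive, so `0 ≤ A u` forces the
minimum to be nonnegative. This makes `A` inverse-monotone, hence injective, hence bijective because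
`V` is finite.
-/

section StepOperator

variable {V R : Type*} [Fintype V]

/-- The reaction-diffusion operator `(A u) K = c K * u K + ∑ L, τ K L * (u K - u L)`, whose
inverse advances the implicit scheme; `c K` plays the role of `m K / Δt`. -/
def stepOperator [CommRing R] (c : V → R) (τ : V → V → R) : (V → R) →ₗ[R] V → R :=
  .pi fun K ↦ c K • .proj K + ∑ L, τ K L • (.proj K - .proj L)

lemma stepOperator_apply [CommRing R] (c : V → R) (τ : V → V → R) (u : V → R) (K : V) :
    stepOperator c τ u K = c K * u K + ∑ L, τ K L * (u K - u L) := by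
  simp [stepOperator]

lemma stepOperator_eq_mul_iff [CommRing R] (c : V → R) (τ : V → V → R) (u f : V → R) :
    stepOperator c τ u = c * f ↔ ∀ K, c K * (u K - f K) + ∑ L, τ K L * (u K - u L) = 0 := by
  refine funext_iff.trans (forall_congr' fun K ↦ ?_)
  rw [stepOperator_apply, Pi.mul_apply, ← sub_eq_zero, mul_sub, sub_add_eq_add_sub]

section OrderedRing

variable [CommRing R] [LinearOrder R] [IsStrictOrderedRing R]
  {c : V → R} {τ : V → V → R} {u v : V → R}

lemma nonneg_of_stepOperator_nonneg (hc : ∀ K, 0 < c K) (hτ : ∀ K L, 0 ≤ τ K L)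
    (hu : 0 ≤ stepOperator c τ u) : 0 ≤ u := by
  intro L
  have : Nonempty V := ⟨L⟩
  obtain ⟨K, hK⟩ := Finite.exists_min u
  have diffusion_nonpos : ∑ L, τ K L * (u K - u L) ≤ 0 :=
    Finset.sum_nonpos fun L _ ↦ mul_nonpos_of_nonneg_of_nonpos (hτ K L) (sub_nonpos.2 (hK L))
  have reaction_nonneg : 0 ≤ c K * u K := by
    have := hu K
    rw [Pi.zero_apply, stepOperator_apply] at this
    linarith
  exact (nonneg_of_mul_nonneg_right reaction_nonneg (hc K)).trans (hK L)

lemma le_of_stepOperator_le (hc : ∀ K, 0 < c K) (hτ : ∀ K L, 0 ≤ τ K L)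
    (huv : stepOperator c τ u ≤ stepOperator c τ v) : u ≤ v := by
  refine sub_nonneg.1 (nonneg_of_stepOperator_nonneg hc hτ ?_)
  rw [map_sub]
  exact sub_nonneg.2 huv

lemma stepOperator_injective (hc : ∀ K, 0 < c K) (hτ : ∀ K L, 0 ≤ τ K L) :
    Function.Injective (stepOperator c τ) := fun _ _ h ↦
  le_antisymm (le_of_stepOperator_le hc hτ h.le) (le_of_stepOperator_le hc hτ h.ge)

end OrderedRing

variable [Field R] [LinearOrder R] [IsStrictOrderedRing R] {c : V → R} {τ : V → V → R}

lemma stepOperator_bijective (hc : ∀ K, 0 < c K) (hτ : ∀ K L, 0 ≤ τ K L) :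
    Function.Bijective (stepOperator c τ) :=
  have hinj := stepOperator_injective hc hτ
  ⟨hinj, LinearMap.injective_iff_surjective.1 hinj⟩

theorem discrete_step_existence_uniqueness_general (hc : ∀ K, 0 < c K) (hτ : ∀ K L, 0 ≤ τ K L)
    (f : V → R) : ∃! u : V → R, ∀ K, c K * (u K - f K) + ∑ L, τ K L * (u K - u L) = 0 := by
  simp only [← stepOperator_eq_mul_iff]
  exact (stepOperator_bijective hc hτ).existsUnique (c * f)

end StepOperator

/-- One time step of the semi-implicit finite-volume scheme:
for every `Δt > 0` and every datum `f : V → ℝ` there exists a unique `u : V → ℝ`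
such that for all `K ∈ V`:
`(m K / Δt) * (u K - f K) + Σ_{L∈V} τ K L * (u K - u L) = 0`. -/
theorem discrete_step_existence_uniqueness
    {V : Type*} [Fintype V] [Nonempty V]
    (m : V → ℝ) (hm : ∀ K, 0 < m K)
    (τ : V → V → ℝ) (hτ_symm : ∀ K L, τ K L = τ L K)
    (hτ_nonneg : ∀ K L, 0 ≤ τ K L) (hτ_diag : ∀ K, τ K K = 0)
    (Δt : ℝ) (hΔt : 0 < Δt) (f : V → ℝ) :
    ∃! u : V → ℝ, ∀ K,
      m K / Δt * (u K - f K) + ∑ L, τ K L * (u K - u L) = 0 := by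
  exact discrete_step_existence_uniqueness_general (fun K ↦ div_pos (hm K) hΔt) hτ_nonneg f
end

section
/- A priori estimate for the scheme (Proposition 3.2): for all T > 0, L ≥ 0, g₀ ≥ 0, A > 0 and B ≥ 0 there exists a constant C₁ ≥ 0, depending only on T, L, g₀, A, B, such that for every integer N ≥ 1, every discrete setting (V, m, τ) with Σ_{K∈V} m K ≤ A, every g Lipschitz with constant L and |g(0)| ≤ g₀, every initial datum u⁰ with E[‖u⁰‖_m²] ≤ B, and the scheme solution (u^n)_{n=0,…,N}, one has for every n ∈ {1,…,N}: E[‖u^n‖_m²] + E[Σ_{k=0}^{n−1} ‖u^{k+1} − u^k‖_m²] + 2·Δt·Σ_{k=0}^{n−1} E[|u^{k+1}|₁²] ≤ C₁. -/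
open MeasureTheory ProbabilityTheory

/-- Discrete `L²` norm squared: `‖w‖_m² = Σ_K m K · (w K)²`. -/
noncomputable def normSq {V : Type} [Fintype V] (m : V → ℝ) (w : V → ℝ) : ℝ :=
  ∑ K, m K * w K ^ 2

/-- Discrete `H¹` seminorm squared: `|w|₁² = (1/2) Σ_K Σ_L τ K L · (w K − w L)²`. -/
noncomputable def seminormSq {V : Type} [Fintype V] (τ : V → V → ℝ) (w : V → ℝ) : ℝ :=
  (1 / 2) * ∑ K, ∑ L, τ K L * (w K - w L) ^ 2

/-- The semi-implicit finite-volume scheme for the stochastic heat equation, in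
abstract graph form, together with all the structural assumptions of the paper:
cell measures `m`, symmetric nonnegative transmissibilities `τ`, time horizon
`T > 0` divided into `N ≥ 1` steps of size `Δt = T/N`, a discrete filtration
`G`, Gaussian increments `ΔW` (each `ΔW (n+1)` is `G (n+1)`-measurable,
independent of `G n`, centred with variance `Δt`), a Lipschitz nonlinearity `g`
(constant `L`), a square-integrable `G 0`-measurable initial datum `u 0`, and the
scheme equations defining `u (n+1)` from `u n`. -/
structure Scheme (V : Type) [Fintype V] [Nonempty V]
    (Ω : Type) [mΩ : MeasurableSpace Ω]
    (T L : ℝ) (g : ℝ → ℝ) (N : ℕ) where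
  P : Measure Ω
  probP : IsProbabilityMeasure P
  m : V → ℝ
  m_pos : ∀ K, 0 < m K
  τ : V → V → ℝ
  τ_symm : ∀ K L', τ K L' = τ L' K
  τ_nonneg : ∀ K L', 0 ≤ τ K L'
  τ_diag : ∀ K, τ K K = 0
  T_pos : 0 < T
  N_pos : 1 ≤ N
  L_nonneg : 0 ≤ L
  g_lip : ∀ r s : ℝ, |g r - g s| ≤ L * |r - s|
  G : ℕ → MeasurableSpace Ω
  G_le : ∀ n, G n ≤ mΩ
  G_mono : Monotone G
  ΔW : ℕ → Ω → ℝ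
  ΔW_meas : ∀ n, n < N → Measurable[G (n + 1)] (ΔW (n + 1))
  ΔW_indep : ∀ n, n < N →
    Indep (MeasurableSpace.comap (ΔW (n + 1)) Real.measurableSpace) (G n) P
  ΔW_law : ∀ n, n < N →
    P.map (ΔW (n + 1)) = gaussianReal 0 (Real.toNNReal (T / N))
  u : ℕ → Ω → V → ℝ
  u_meas : ∀ n, n ≤ N → Measurable[G n] (u n)
  u0_int : Integrable (fun ω => normSq m (u 0 ω)) P
  scheme : ∀ n, n < N → ∀ᵐ ω ∂P, ∀ K,
    m K / (T / N) * (u (n + 1) ω K - u n ω K)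
      + ∑ L', τ K L' * (u (n + 1) ω K - u (n + 1) ω L')
      = m K / (T / N) * g (u n ω K) * ΔW (n + 1) ω

/-!
Testing the scheme with `u (n + 1)` gives an energy identity with the noise term
`2 ⟨ξ f, u (n + 1)⟩ = 2 ⟨ξ f, u n⟩ + 2 ⟨ξ f, u (n + 1) - u n⟩`. The first part is centred, since `ξ`
is independent of the past. Young's inequality bounds the second by `2 ‖ξ f‖²` plus half of the
squared increment on the left-hand side, and by independence and linear growth
`E ‖ξ f‖² ≤ δ (2 L² E ‖u n‖² + 2 g₀² ∑ m)`. The discrete Grönwall inequality, applied to the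
energy plus the accumulated dissipation, then closes the estimate.
-/

section Deterministic

variable {V : Type} [Fintype V] {m : V → ℝ} {τ : V → V → ℝ}

/-- The discrete `L²` inner product polarising `normSq m`. -/
noncomputable def l2Inner (m v w : V → ℝ) : ℝ :=
  ∑ K, m K * (v K * w K)

/-- The two-point flux operator of the scheme, i.e. the discrete `-Δ` before division by the cell
measure. -/
noncomputable def graphLaplacian (τ : V → V → ℝ) (v : V → ℝ) (K : V) : ℝ :=
  ∑ L, τ K L * (v K - v L)

lemma normSq_nonneg (hm : ∀ K, 0 ≤ m K) (w : V → ℝ) : 0 ≤ normSq m w :=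
  Finset.sum_nonneg fun K _ ↦ mul_nonneg (hm K) (sq_nonneg _)

lemma seminormSq_nonneg (hτ : ∀ K L, 0 ≤ τ K L) (w : V → ℝ) : 0 ≤ seminormSq τ w :=
  mul_nonneg (by norm_num) <| Finset.sum_nonneg fun K _ ↦ Finset.sum_nonneg fun L _ ↦
    mul_nonneg (hτ K L) (sq_nonneg _)

lemma normSq_smul (m : V → ℝ) (c : ℝ) (w : V → ℝ) : normSq m (c • w) = c ^ 2 * normSq m w := by
  simp only [normSq, Finset.mul_sum, Pi.smul_apply, smul_eq_mul]
  exact Finset.sum_congr rfl fun K _ ↦ by ring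

lemma l2Inner_smul_left (m : V → ℝ) (c : ℝ) (v w : V → ℝ) :
    l2Inner m (c • v) w = c * l2Inner m v w := by
  simp only [l2Inner, Finset.mul_sum, Pi.smul_apply, smul_eq_mul]
  exact Finset.sum_congr rfl fun K _ ↦ by ring

lemma l2Inner_sub_right (m v w z : V → ℝ) :
    l2Inner m v (w - z) = l2Inner m v w - l2Inner m v z := by
  simp only [l2Inner, ← Finset.sum_sub_distrib, Pi.sub_apply]
  exact Finset.sum_congr rfl fun K _ ↦ by ring

lemma two_mul_abs_l2Inner_le (hm : ∀ K, 0 ≤ m K) {ε : ℝ} (hε : 0 < ε) (v w : V → ℝ) :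
    2 * |l2Inner m v w| ≤ ε * normSq m v + ε⁻¹ * normSq m w := by
  have young (a b : ℝ) : 2 * |a * b| ≤ ε * a ^ 2 + ε⁻¹ * b ^ 2 := by
    simpa only [abs_mul, sq_abs, mul_assoc] using two_mul_le_add_mul_sq (a := |a|) (b := |b|) hε
  calc 2 * |l2Inner m v w|
      ≤ 2 * ∑ K, |m K * (v K * w K)| := by gcongr; exact Finset.abs_sum_le_sum_abs _ _
    _ = ∑ K, m K * (2 * |v K * w K|) := by
        rw [Finset.mul_sum]
        exact Finset.sum_congr rfl fun K _ ↦ by rw [abs_mul, abs_of_nonneg (hm K)]; ring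
    _ ≤ ∑ K, m K * (ε * v K ^ 2 + ε⁻¹ * w K ^ 2) :=
        Finset.sum_le_sum fun K _ ↦ mul_le_mul_of_nonneg_left (young _ _) (hm K)
    _ = ε * normSq m v + ε⁻¹ * normSq m w := by
        simp only [normSq, Finset.mul_sum, ← Finset.sum_add_distrib]
        exact Finset.sum_congr rfl fun K _ ↦ by ring

lemma normSq_le_of_linear_growth (hm : ∀ K, 0 ≤ m K) {L c : ℝ} {v w : V → ℝ}
    (h : ∀ K, |v K| ≤ L * |w K| + c) :
    normSq m v ≤ 2 * L ^ 2 * normSq m w + 2 * c ^ 2 * ∑ K, m K := by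
  have sq_le (K : V) : v K ^ 2 ≤ 2 * ((L * |w K|) ^ 2 + c ^ 2) :=
    (sq_abs (v K) ▸ pow_le_pow_left₀ (abs_nonneg _) (h K) 2).trans add_sq_le
  calc normSq m v ≤ ∑ K, m K * (2 * ((L * |w K|) ^ 2 + c ^ 2)) :=
        Finset.sum_le_sum fun K _ ↦ mul_le_mul_of_nonneg_left (sq_le K) (hm K)
    _ = 2 * L ^ 2 * normSq m w + 2 * c ^ 2 * ∑ K, m K := by
        simp only [normSq, Finset.mul_sum, ← Finset.sum_add_distrib, mul_pow, sq_abs]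
        exact Finset.sum_congr rfl fun K _ ↦ by ring

lemma sum_graphLaplacian_mul_self (hτ : ∀ K L, τ K L = τ L K) (v : V → ℝ) :
    ∑ K, graphLaplacian τ v K * v K = seminormSq τ v := by
  have swap : ∑ K, ∑ L, τ K L * (v K - v L) * v K = ∑ K, ∑ L, τ K L * (v L - v K) * v L := by
    rw [Finset.sum_comm]
    simp only [hτ]
  have split : ∑ K, ∑ L, τ K L * (v K - v L) ^ 2
      = ∑ K, ∑ L, τ K L * (v K - v L) * v K + ∑ K, ∑ L, τ K L * (v L - v K) * v L := by
    simp only [← Finset.sum_add_distrib]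
    exact Finset.sum_congr rfl fun K _ ↦ Finset.sum_congr rfl fun L _ ↦ by ring
  simp only [seminormSq, split, ← swap, graphLaplacian, Finset.sum_mul]
  ring

lemma implicit_step_energy_eq (hτ : ∀ K L, τ K L = τ L K) {δ : ℝ} (hδ : δ ≠ 0) {u v q : V → ℝ}
    (h : ∀ K, m K / δ * (v K - u K) + graphLaplacian τ v K = m K / δ * q K) :
    normSq m v + normSq m (v - u) + 2 * δ * seminormSq τ v
      = normSq m u + 2 * l2Inner m q v := by
  simp only [← sum_graphLaplacian_mul_self hτ, normSq, l2Inner, Finset.mul_sum,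
    ← Finset.sum_add_distrib, Pi.sub_apply]
  refine Finset.sum_congr rfl fun K _ ↦ ?_
  have step := h K
  field_simp at step
  linear_combination 2 * v K * step

lemma implicit_step_energy_le (hm : ∀ K, 0 ≤ m K) (hτ : ∀ K L, τ K L = τ L K) {δ : ℝ}
    (hδ : δ ≠ 0) {u v q : V → ℝ}
    (h : ∀ K, m K / δ * (v K - u K) + graphLaplacian τ v K = m K / δ * q K) :
    normSq m v + 1 / 2 * normSq m (v - u) + 2 * δ * seminormSq τ v
      ≤ normSq m u + 2 * normSq m q + 2 * l2Inner m q u := by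
  have energy := implicit_step_energy_eq hτ hδ h
  have young := two_mul_abs_l2Inner_le hm two_pos q (v - u)
  have le_abs := le_abs_self (l2Inner m q (v - u))
  rw [l2Inner_sub_right] at young le_abs
  linarith

lemma measurable_normSq (m : V → ℝ) : Measurable (normSq m) := by
  unfold normSq
  fun_prop

lemma measurable_seminormSq (τ : V → V → ℝ) : Measurable (seminormSq τ) := by
  unfold seminormSq
  fun_prop

end Deterministic

lemma discrete_gronwall_of_lt {y b c : ℕ → ℝ} {N : ℕ} (hy : ∀ n, 0 ≤ y n)
    (hc : ∀ n, 0 ≤ c n) (hb : ∀ n, 0 ≤ b n)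
    (h : ∀ n < N, y (n + 1) ≤ (1 + c n) * y n + b n) {n : ℕ} (hn : n ≤ N) :
    y n ≤ (y 0 + ∑ k ∈ Finset.range n, b k) * Real.exp (∑ k ∈ Finset.range n, c k) := by
  -- Freezing `y` at time `N` makes the recursion hold at all times.
  have frozen (k : ℕ) (_ : k ≥ 0) :
      y (min (k + 1) N) ≤ (1 + c k) * y (min k N) + b k := by
    rcases lt_or_ge k N with hk | hk
    · simpa [min_eq_left hk.le, min_eq_left (Nat.succ_le_of_lt hk)] using h k hk
    · rw [min_eq_right hk, min_eq_right (hk.trans k.le_succ)]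
      linarith [mul_nonneg (hc k) (hy N), hb k]
  simpa [min_eq_left hn] using
    discrete_gronwall (u := fun k ↦ y (min k N)) (hy _) frozen (fun k _ ↦ hc k)
      (fun k _ ↦ hb k) n.zero_le

/-- The semi-implicit scheme with time step `δ` for a noise coefficient `f` that is adapted to `G`
and has at most linear growth in the solution `u`; for the stochastic heat equation `f n ω K` is
`g (u n ω K)`. The increments `ξ` are centred, of variance at most `δ` and independent of the past,
but not necessarily Gaussian. -/
structure IsSemiImplicitScheme {V : Type} [Fintype V] {Ω : Type*} [mΩ : MeasurableSpace Ω]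
    (P : Measure Ω) (G : ℕ → MeasurableSpace Ω) (m : V → ℝ) (τ : V → V → ℝ) (L g₀ δ : ℝ) (N : ℕ)
    (f : ℕ → Ω → V → ℝ) (ξ : ℕ → Ω → ℝ) (u : ℕ → Ω → V → ℝ) : Prop where
  m_nonneg : ∀ K, 0 ≤ m K
  τ_symm : ∀ K L', τ K L' = τ L' K
  τ_nonneg : ∀ K L', 0 ≤ τ K L'
  δ_pos : 0 < δ
  G_le : ∀ n ≤ N, G n ≤ mΩ
  measurable_u : ∀ n ≤ N, Measurable[G n] (u n)
  integrable_normSq_zero : Integrable (fun ω ↦ normSq m (u 0 ω)) P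
  measurable_f : ∀ n < N, Measurable[G n] (f n)
  growth : ∀ n < N, ∀ ω K, |f n ω K| ≤ L * |u n ω K| + g₀
  memLp_ξ : ∀ n < N, MemLp (ξ (n + 1)) 2 P
  integral_ξ : ∀ n < N, P[ξ (n + 1)] = 0
  integral_ξ_sq_le : ∀ n < N, ∫ ω, ξ (n + 1) ω ^ 2 ∂P ≤ δ
  indep_ξ : ∀ n < N, Indep (G n) (MeasurableSpace.comap (ξ (n + 1)) inferInstance) P
  step : ∀ n < N, ∀ᵐ ω ∂P, ∀ K,
    m K / δ * (u (n + 1) ω K - u n ω K) + graphLaplacian τ (u (n + 1) ω) K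
      = m K / δ * (ξ (n + 1) ω * f n ω K)

/-- The expected energy at step `n` plus the dissipation accumulated so far. The factor `1 / 2` is
what remains of the increments once the noise has been absorbed by Young's inequality. -/
noncomputable def dissipatedEnergy {V : Type} [Fintype V] {Ω : Type*} [MeasurableSpace Ω]
    (P : Measure Ω) (m : V → ℝ) (τ : V → V → ℝ) (δ : ℝ) (u : ℕ → Ω → V → ℝ) (n : ℕ) : ℝ :=
  ∫ ω, normSq m (u n ω) ∂P + ∑ k ∈ Finset.range n,
    (1 / 2 * ∫ ω, normSq m (u (k + 1) ω - u k ω) ∂P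
      + 2 * δ * ∫ ω, seminormSq τ (u (k + 1) ω) ∂P)

namespace IsSemiImplicitScheme

variable {V : Type} [Fintype V] {Ω : Type*} [mΩ : MeasurableSpace Ω] {P : Measure Ω}
  {G : ℕ → MeasurableSpace Ω} {m : V → ℝ} {τ : V → V → ℝ} {L g₀ δ : ℝ} {N n : ℕ}
  {f : ℕ → Ω → V → ℝ} {ξ : ℕ → Ω → ℝ} {u : ℕ → Ω → V → ℝ}

lemma indepFun_ξ (h : IsSemiImplicitScheme P G m τ L g₀ δ N f ξ u) (hn : n < N) {X : Ω → ℝ}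
    (hX : Measurable[G n] X) : IndepFun X (ξ (n + 1)) P := by
  rw [IndepFun_iff_Indep]
  exact indep_of_indep_of_le_left (h.indep_ξ n hn) hX.comap_le

lemma measurable_normSq_f (h : IsSemiImplicitScheme P G m τ L g₀ δ N f ξ u) (hn : n < N) :
    Measurable[G n] fun ω ↦ normSq m (f n ω) :=
  (measurable_normSq m).comp (h.measurable_f n hn)

lemma measurable_l2Inner (h : IsSemiImplicitScheme P G m τ L g₀ δ N f ξ u) (hn : n < N) :
    Measurable[G n] fun ω ↦ l2Inner m (f n ω) (u n ω) := by
  have hf := h.measurable_f n hn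
  have hu := h.measurable_u n hn.le
  unfold l2Inner
  fun_prop

lemma indepFun_ξ_sq_normSq_f (h : IsSemiImplicitScheme P G m τ L g₀ δ N f ξ u) (hn : n < N) :
    IndepFun (fun ω ↦ ξ (n + 1) ω ^ 2) (fun ω ↦ normSq m (f n ω)) P :=
  (h.indepFun_ξ hn (h.measurable_normSq_f hn)).symm.comp (measurable_id.pow_const 2) measurable_id

lemma energy_le_ae (h : IsSemiImplicitScheme P G m τ L g₀ δ N f ξ u) (hn : n < N) :
    ∀ᵐ ω ∂P, normSq m (u (n + 1) ω) + 1 / 2 * normSq m (u (n + 1) ω - u n ω)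
        + 2 * δ * seminormSq τ (u (n + 1) ω)
      ≤ normSq m (u n ω) + 2 * normSq m (ξ (n + 1) ω • f n ω)
        + 2 * l2Inner m (ξ (n + 1) ω • f n ω) (u n ω) := by
  filter_upwards [h.step n hn] with ω step
  exact implicit_step_energy_le h.m_nonneg h.τ_symm h.δ_pos.ne' step

lemma dissipation_nonneg (h : IsSemiImplicitScheme P G m τ L g₀ δ N f ξ u) (k : ℕ) :
    0 ≤ 1 / 2 * ∫ ω, normSq m (u (k + 1) ω - u k ω) ∂P
      + 2 * δ * ∫ ω, seminormSq τ (u (k + 1) ω) ∂P := by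
  have δ_pos := h.δ_pos
  have increment_nonneg : 0 ≤ ∫ ω, normSq m (u (k + 1) ω - u k ω) ∂P :=
    integral_nonneg fun ω ↦ normSq_nonneg h.m_nonneg _
  have gradient_nonneg : 0 ≤ ∫ ω, seminormSq τ (u (k + 1) ω) ∂P :=
    integral_nonneg fun ω ↦ seminormSq_nonneg h.τ_nonneg _
  positivity

lemma integral_normSq_le_dissipatedEnergy (h : IsSemiImplicitScheme P G m τ L g₀ δ N f ξ u)
    (n : ℕ) : ∫ ω, normSq m (u n ω) ∂P ≤ dissipatedEnergy P m τ δ u n :=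
  le_add_of_nonneg_right (Finset.sum_nonneg fun k _ ↦ h.dissipation_nonneg k)

variable [IsProbabilityMeasure P]

lemma integrable_normSq_f (h : IsSemiImplicitScheme P G m τ L g₀ δ N f ξ u) (hn : n < N)
    (hu : Integrable (fun ω ↦ normSq m (u n ω)) P) :
    Integrable (fun ω ↦ normSq m (f n ω)) P := by
  refine ((hu.const_mul (2 * L ^ 2)).add (integrable_const (2 * g₀ ^ 2 * ∑ K, m K))).mono'
    ((h.measurable_normSq_f hn).mono (h.G_le n hn.le) le_rfl).aestronglyMeasurable
    (.of_forall fun ω ↦ ?_)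
  rw [Real.norm_of_nonneg (normSq_nonneg h.m_nonneg _)]
  exact normSq_le_of_linear_growth h.m_nonneg (h.growth n hn ω)

lemma integrable_l2Inner (h : IsSemiImplicitScheme P G m τ L g₀ δ N f ξ u) (hn : n < N)
    (hu : Integrable (fun ω ↦ normSq m (u n ω)) P) :
    Integrable (fun ω ↦ l2Inner m (f n ω) (u n ω)) P := by
  refine ((h.integrable_normSq_f hn hu).add hu).mono'
    ((h.measurable_l2Inner hn).mono (h.G_le n hn.le) le_rfl).aestronglyMeasurable
    (.of_forall fun ω ↦ ?_)
  have young := two_mul_abs_l2Inner_le h.m_nonneg one_pos (f n ω) (u n ω)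
  rw [Real.norm_eq_abs, Pi.add_apply]
  linarith [abs_nonneg (l2Inner m (f n ω) (u n ω))]

lemma integrable_normSq_noise (h : IsSemiImplicitScheme P G m τ L g₀ δ N f ξ u) (hn : n < N)
    (hu : Integrable (fun ω ↦ normSq m (u n ω)) P) :
    Integrable (fun ω ↦ normSq m (ξ (n + 1) ω • f n ω)) P := by
  simp only [normSq_smul]
  exact (h.indepFun_ξ_sq_normSq_f hn).integrable_mul (h.memLp_ξ n hn).integrable_sq
    (h.integrable_normSq_f hn hu)

lemma integral_normSq_noise_le (h : IsSemiImplicitScheme P G m τ L g₀ δ N f ξ u) (hn : n < N)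
    (hu : Integrable (fun ω ↦ normSq m (u n ω)) P) :
    ∫ ω, normSq m (ξ (n + 1) ω • f n ω) ∂P
      ≤ δ * (2 * L ^ 2 * ∫ ω, normSq m (u n ω) ∂P + 2 * g₀ ^ 2 * ∑ K, m K) := by
  have hf := h.integrable_normSq_f hn hu
  calc ∫ ω, normSq m (ξ (n + 1) ω • f n ω) ∂P
      = (∫ ω, ξ (n + 1) ω ^ 2 ∂P) * ∫ ω, normSq m (f n ω) ∂P := by
        simp only [normSq_smul]
        exact (h.indepFun_ξ_sq_normSq_f hn).integral_fun_mul_eq_mul_integral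
          (h.memLp_ξ n hn).integrable_sq.aestronglyMeasurable hf.aestronglyMeasurable
    _ ≤ δ * ∫ ω, normSq m (f n ω) ∂P := by
        gcongr
        · exact integral_nonneg fun ω ↦ normSq_nonneg h.m_nonneg _
        · exact h.integral_ξ_sq_le n hn
    _ ≤ δ * ∫ ω, (2 * L ^ 2 * normSq m (u n ω) + 2 * g₀ ^ 2 * ∑ K, m K) ∂P := by
        refine mul_le_mul_of_nonneg_left (integral_mono hf
          ((hu.const_mul _).add (integrable_const _)) fun ω ↦ ?_) h.δ_pos.le
        exact normSq_le_of_linear_growth h.m_nonneg (h.growth n hn ω)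
    _ = δ * (2 * L ^ 2 * ∫ ω, normSq m (u n ω) ∂P + 2 * g₀ ^ 2 * ∑ K, m K) := by
        rw [integral_add (hu.const_mul _) (integrable_const _), integral_const_mul]
        simp

lemma integrable_l2Inner_noise (h : IsSemiImplicitScheme P G m τ L g₀ δ N f ξ u) (hn : n < N)
    (hu : Integrable (fun ω ↦ normSq m (u n ω)) P) :
    Integrable (fun ω ↦ l2Inner m (ξ (n + 1) ω • f n ω) (u n ω)) P := by
  simp only [l2Inner_smul_left]
  exact (h.indepFun_ξ hn (h.measurable_l2Inner hn)).symm.integrable_mul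
    ((h.memLp_ξ n hn).integrable one_le_two) (h.integrable_l2Inner hn hu)

lemma integral_l2Inner_noise (h : IsSemiImplicitScheme P G m τ L g₀ δ N f ξ u) (hn : n < N)
    (hu : Integrable (fun ω ↦ normSq m (u n ω)) P) :
    ∫ ω, l2Inner m (ξ (n + 1) ω • f n ω) (u n ω) ∂P = 0 := by
  simp only [l2Inner_smul_left]
  rw [(h.indepFun_ξ hn (h.measurable_l2Inner hn)).symm.integral_fun_mul_eq_mul_integral
    (h.memLp_ξ n hn).aestronglyMeasurable (h.integrable_l2Inner hn hu).aestronglyMeasurable,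
    h.integral_ξ n hn, zero_mul]

lemma integrable_energy_bound (h : IsSemiImplicitScheme P G m τ L g₀ δ N f ξ u) (hn : n < N)
    (hu : Integrable (fun ω ↦ normSq m (u n ω)) P) :
    Integrable (fun ω ↦ normSq m (u n ω) + 2 * normSq m (ξ (n + 1) ω • f n ω)
      + 2 * l2Inner m (ξ (n + 1) ω • f n ω) (u n ω)) P :=
  (hu.add ((h.integrable_normSq_noise hn hu).const_mul 2)).add
    ((h.integrable_l2Inner_noise hn hu).const_mul 2)

lemma integrable_energy_succ (h : IsSemiImplicitScheme P G m τ L g₀ δ N f ξ u) (hn : n < N)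
    (hu : Integrable (fun ω ↦ normSq m (u n ω)) P) :
    Integrable (fun ω ↦ normSq m (u (n + 1) ω)) P ∧
      Integrable (fun ω ↦ normSq m (u (n + 1) ω - u n ω)) P ∧
      Integrable (fun ω ↦ seminormSq τ (u (n + 1) ω)) P := by
  have δ_pos := h.δ_pos
  have meas : Measurable (u n) := (h.measurable_u n hn.le).mono (h.G_le n hn.le) le_rfl
  have meas_succ : Measurable (u (n + 1)) :=
    (h.measurable_u (n + 1) hn).mono (h.G_le (n + 1) hn) le_rfl
  let a (ω : Ω) := normSq m (u (n + 1) ω)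
  let d (ω : Ω) := 1 / 2 * normSq m (u (n + 1) ω - u n ω)
  let s (ω : Ω) := 2 * δ * seminormSq τ (u (n + 1) ω)
  have a_nonneg : 0 ≤ a := fun ω ↦ normSq_nonneg h.m_nonneg _
  have d_nonneg : 0 ≤ d := fun ω ↦ mul_nonneg (by norm_num) (normSq_nonneg h.m_nonneg _)
  have s_nonneg : 0 ≤ s := fun ω ↦ mul_nonneg (by positivity) (seminormSq_nonneg h.τ_nonneg _)
  have a_meas : Measurable a := (measurable_normSq m).comp meas_succ
  have d_meas : Measurable d := ((measurable_normSq m).comp (meas_succ.sub meas)).const_mul _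
  have s_meas : Measurable s := ((measurable_seminormSq τ).comp meas_succ).const_mul _
  have total : Integrable (a + d + s) P := by
    refine (h.integrable_energy_bound hn hu).mono'
      ((a_meas.add d_meas).add s_meas).aestronglyMeasurable ?_
    filter_upwards [h.energy_le_ae hn] with ω energy
    rwa [Real.norm_of_nonneg (add_nonneg (add_nonneg a_nonneg d_nonneg) s_nonneg ω)]
  obtain ⟨a_add_d, hs⟩ := (integrable_add_iff_of_nonneg (a_meas.add d_meas).aestronglyMeasurable
    (.of_forall (add_nonneg a_nonneg d_nonneg)) (.of_forall s_nonneg)).1 total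
  obtain ⟨ha, hd⟩ := (integrable_add_iff_of_nonneg a_meas.aestronglyMeasurable
    (.of_forall a_nonneg) (.of_forall d_nonneg)).1 a_add_d
  exact ⟨ha, (integrable_const_mul_iff (by norm_num) _).1 hd,
    (integrable_const_mul_iff (IsUnit.mk0 _ (by positivity)) _).1 hs⟩

lemma integrable_normSq_u (h : IsSemiImplicitScheme P G m τ L g₀ δ N f ξ u) (hn : n ≤ N) :
    Integrable (fun ω ↦ normSq m (u n ω)) P := by
  induction n with
  | zero => exact h.integrable_normSq_zero
  | succ n ih => exact (h.integrable_energy_succ hn (ih (Nat.le_of_succ_le hn))).1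

lemma integral_energy_succ_le (h : IsSemiImplicitScheme P G m τ L g₀ δ N f ξ u) (hn : n < N) :
    ∫ ω, normSq m (u (n + 1) ω) ∂P + 1 / 2 * ∫ ω, normSq m (u (n + 1) ω - u n ω) ∂P
        + 2 * δ * ∫ ω, seminormSq τ (u (n + 1) ω) ∂P
      ≤ (1 + 4 * L ^ 2 * δ) * ∫ ω, normSq m (u n ω) ∂P + 4 * g₀ ^ 2 * (∑ K, m K) * δ := by
  have hu := h.integrable_normSq_u hn.le
  obtain ⟨ha, hd, hs⟩ := h.integrable_energy_succ hn hu
  have hq := (h.integrable_normSq_noise hn hu).const_mul 2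
  have energy := integral_mono_ae ((ha.fun_add (hd.const_mul (1 / 2))).fun_add
    (hs.const_mul (2 * δ))) (h.integrable_energy_bound hn hu) (h.energy_le_ae hn)
  rw [integral_add (ha.fun_add (hd.const_mul _)) (hs.const_mul _),
    integral_add ha (hd.const_mul _),
    integral_add (hu.fun_add hq) ((h.integrable_l2Inner_noise hn hu).const_mul 2),
    integral_add hu hq] at energy
  simp only [integral_const_mul, h.integral_l2Inner_noise hn hu] at energy
  linarith [h.integral_normSq_noise_le hn hu]

lemma dissipatedEnergy_succ_le (h : IsSemiImplicitScheme P G m τ L g₀ δ N f ξ u) (hn : n < N) :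
    dissipatedEnergy P m τ δ u (n + 1)
      ≤ (1 + 4 * L ^ 2 * δ) * dissipatedEnergy P m τ δ u n + 4 * g₀ ^ 2 * (∑ K, m K) * δ := by
  have δ_pos := h.δ_pos
  have growth := mul_le_mul_of_nonneg_left (h.integral_normSq_le_dissipatedEnergy n)
    (by positivity : 0 ≤ 4 * L ^ 2 * δ)
  have energy := h.integral_energy_succ_le hn
  unfold dissipatedEnergy at growth ⊢
  rw [Finset.sum_range_succ]
  linarith

lemma dissipatedEnergy_le (h : IsSemiImplicitScheme P G m τ L g₀ δ N f ξ u) (hn : n ≤ N) :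
    dissipatedEnergy P m τ δ u n
      ≤ (∫ ω, normSq m (u 0 ω) ∂P + 4 * g₀ ^ 2 * (∑ K, m K) * (n * δ))
        * Real.exp (4 * L ^ 2 * (n * δ)) := by
  have δ_pos := h.δ_pos
  have mass_nonneg : 0 ≤ ∑ K, m K := Finset.sum_nonneg fun K _ ↦ h.m_nonneg K
  have energy_nonneg (k : ℕ) : 0 ≤ dissipatedEnergy P m τ δ u k :=
    (integral_nonneg fun ω ↦ normSq_nonneg h.m_nonneg _).trans
      (h.integral_normSq_le_dissipatedEnergy k)
  have gronwall := discrete_gronwall_of_lt (b := fun _ ↦ 4 * g₀ ^ 2 * (∑ K, m K) * δ)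
    (c := fun _ ↦ 4 * L ^ 2 * δ) energy_nonneg (fun _ ↦ by positivity) (fun _ ↦ by positivity)
    (fun _ ↦ h.dissipatedEnergy_succ_le) hn
  simpa [dissipatedEnergy, mul_left_comm] using gronwall

end IsSemiImplicitScheme

theorem apriori_estimate_general {V : Type} [Fintype V] {Ω : Type*} [MeasurableSpace Ω]
    {P : Measure Ω} [IsProbabilityMeasure P] {G : ℕ → MeasurableSpace Ω} {m : V → ℝ}
    {τ : V → V → ℝ} {T L g₀ A B δ : ℝ} {N n : ℕ} {f : ℕ → Ω → V → ℝ} {ξ : ℕ → Ω → ℝ}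
    {u : ℕ → Ω → V → ℝ} (h : IsSemiImplicitScheme P G m τ L g₀ δ N f ξ u)
    (hA : ∑ K, m K ≤ A) (hB : ∫ ω, normSq m (u 0 ω) ∂P ≤ B) (hT : N * δ ≤ T) (hn : n ≤ N) :
    ∫ ω, normSq m (u n ω) ∂P
        + ∫ ω, ∑ k ∈ Finset.range n, normSq m (u (k + 1) ω - u k ω) ∂P
        + 2 * δ * ∑ k ∈ Finset.range n, ∫ ω, seminormSq τ (u (k + 1) ω) ∂P
      ≤ 2 * ((B + 4 * g₀ ^ 2 * A * T) * Real.exp (4 * L ^ 2 * T)) := by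
  have δ_pos := h.δ_pos
  have hnT : n * δ ≤ T := le_trans (by gcongr) hT
  have A_nonneg : 0 ≤ A := (Finset.sum_nonneg fun K _ ↦ h.m_nonneg K).trans hA
  have B_nonneg : 0 ≤ B := (integral_nonneg fun ω ↦ normSq_nonneg h.m_nonneg _).trans hB
  have T_nonneg : 0 ≤ T := le_trans (by positivity) hT
  have energy_nonneg : 0 ≤ ∫ ω, normSq m (u n ω) ∂P :=
    integral_nonneg fun ω ↦ normSq_nonneg h.m_nonneg _
  have gradient_nonneg : 0 ≤ 2 * δ * ∑ k ∈ Finset.range n, ∫ ω, seminormSq τ (u (k + 1) ω) ∂P :=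
    mul_nonneg (by positivity) <| Finset.sum_nonneg fun k _ ↦
      integral_nonneg fun ω ↦ seminormSq_nonneg h.τ_nonneg _
  have integrable_increment (k : ℕ) (hk : k ∈ Finset.range n) :
      Integrable (fun ω ↦ normSq m (u (k + 1) ω - u k ω)) P :=
    have hkN : k < N := (Finset.mem_range.1 hk).trans_le hn
    (h.integrable_energy_succ hkN (h.integrable_normSq_u hkN.le)).2.1
  have bound : dissipatedEnergy P m τ δ u n
      ≤ (B + 4 * g₀ ^ 2 * A * T) * Real.exp (4 * L ^ 2 * T) := by
    refine (h.dissipatedEnergy_le hn).trans ?_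
    gcongr
  rw [dissipatedEnergy, Finset.sum_add_distrib, ← Finset.mul_sum, ← Finset.mul_sum] at bound
  rw [integral_finsetSum _ integrable_increment]
  linarith

namespace Scheme

variable {V : Type} [Fintype V] [Nonempty V] {Ω : Type} [MeasurableSpace Ω] {T L : ℝ}
  {g : ℝ → ℝ} {N : ℕ}

lemma timeStep_pos (S : Scheme V Ω T L g N) : 0 < T / N :=
  div_pos S.T_pos (Nat.cast_pos.2 S.N_pos)

lemma mul_timeStep (S : Scheme V Ω T L g N) : N * (T / N) = T :=
  mul_div_cancel₀ T (Nat.cast_ne_zero.2 (Nat.one_le_iff_ne_zero.1 S.N_pos))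

lemma measurable_g (S : Scheme V Ω T L g N) : Measurable g :=
  (LipschitzWith.of_dist_le_mul (K := ⟨L, S.L_nonneg⟩) S.g_lip).continuous.measurable

lemma abs_g_le (S : Scheme V Ω T L g N) (r : ℝ) : |g r| ≤ L * |r| + |g 0| := by
  have lip := S.g_lip r 0
  rw [sub_zero] at lip
  linarith [abs_sub_abs_le_abs_sub (g r) (g 0)]

lemma hasLaw_ΔW (S : Scheme V Ω T L g N) {n : ℕ} (hn : n < N) :
    HasLaw (S.ΔW (n + 1)) (gaussianReal 0 (T / N).toNNReal) S.P where
  aemeasurable := ((S.ΔW_meas n hn).mono (S.G_le (n + 1)) le_rfl).aemeasurable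
  map_eq := S.ΔW_law n hn

lemma integral_ΔW (S : Scheme V Ω T L g N) {n : ℕ} (hn : n < N) : S.P[S.ΔW (n + 1)] = 0 := by
  rw [(S.hasLaw_ΔW hn).integral_eq, integral_id_gaussianReal]

lemma integral_ΔW_sq (S : Scheme V Ω T L g N) {n : ℕ} (hn : n < N) :
    ∫ ω, S.ΔW (n + 1) ω ^ 2 ∂S.P = T / N := by
  rw [← variance_of_integral_eq_zero (S.hasLaw_ΔW hn).aemeasurable (S.integral_ΔW hn),
    (S.hasLaw_ΔW hn).variance_eq, variance_id_gaussianReal, Real.coe_toNNReal _ S.timeStep_pos.le]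

lemma isSemiImplicitScheme (S : Scheme V Ω T L g N) {g₀ : ℝ} (hg₀ : |g 0| ≤ g₀) :
    IsSemiImplicitScheme S.P S.G S.m S.τ L g₀ (T / N) N (fun n ω K ↦ g (S.u n ω K)) S.ΔW S.u where
  m_nonneg K := (S.m_pos K).le
  τ_symm := S.τ_symm
  τ_nonneg := S.τ_nonneg
  δ_pos := S.timeStep_pos
  G_le n _ := S.G_le n
  measurable_u := S.u_meas
  integrable_normSq_zero := S.u0_int
  measurable_f n hn := (measurable_pi_lambda (fun (w : V → ℝ) K ↦ g (w K)) fun K ↦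
    S.measurable_g.comp (measurable_pi_apply K)).comp (S.u_meas n hn.le)
  growth _ _ _ _ := (S.abs_g_le _).trans (by gcongr)
  memLp_ξ _ hn := (S.hasLaw_ΔW hn).hasGaussianLaw.memLp_two
  integral_ξ _ := S.integral_ΔW
  integral_ξ_sq_le _ hn := (S.integral_ΔW_sq hn).le
  indep_ξ n hn := (S.ΔW_indep n hn).symm
  step n hn := by
    filter_upwards [S.scheme n hn] with ω step K
    rw [mul_comm (S.ΔW (n + 1) ω), ← mul_assoc]
    exact step K

end Scheme

/-- **Proposition 3.2, a priori estimate.** For all `T > 0`, `L ≥ 0`,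
`g₀ ≥ 0`, `A > 0`, `B ≥ 0` there is a constant `C₁ ≥ 0`, depending only on
`T, L, g₀, A, B`, such that for every scheme (with total mass `Σ m K ≤ A`,
`|g 0| ≤ g₀`, `E[‖u⁰‖_m²] ≤ B`) and every `n ∈ {1,…,N}`:
`E[‖uⁿ‖_m²] + E[Σ_{k<n} ‖u^{k+1}−u^k‖_m²] + 2Δt Σ_{k<n} E[|u^{k+1}|₁²] ≤ C₁`. -/
theorem apriori_estimate (T L g₀ A B : ℝ)
    (hT : 0 < T) (hL : 0 ≤ L) (hg₀ : 0 ≤ g₀) (hA : 0 < A) (hB : 0 ≤ B) :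
    ∃ C₁ : ℝ, 0 ≤ C₁ ∧
      ∀ (V : Type) [Fintype V] [Nonempty V]
        (Ω : Type) [MeasurableSpace Ω] (g : ℝ → ℝ) (N : ℕ)
        (S : Scheme V Ω T L g N),
        |g 0| ≤ g₀ → (∑ K, S.m K) ≤ A →
        (∫ ω, normSq S.m (S.u 0 ω) ∂S.P) ≤ B →
        ∀ n, 1 ≤ n → n ≤ N →
          (∫ ω, normSq S.m (S.u n ω) ∂S.P)
            + (∫ ω, ∑ k ∈ Finset.range n,
                normSq S.m (fun K => S.u (k + 1) ω K - S.u k ω K) ∂S.P)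
            + 2 * (T / N) * ∑ k ∈ Finset.range n,
                ∫ ω, seminormSq S.τ (S.u (k + 1) ω) ∂S.P
          ≤ C₁ := by
  refine ⟨2 * ((B + 4 * g₀ ^ 2 * A * T) * Real.exp (4 * L ^ 2 * T)), by positivity,
    fun V _ _ Ω _ g N S hg hm hu n _ hn ↦ ?_⟩
  have := S.probP
  exact apriori_estimate_general (S.isSemiImplicitScheme hg) hm hu S.mul_timeStep.le hn
end
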